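/- arXiv:2007.13205 — 3 statements merged into one kernel-verified Lean document; each statement's English description precedes it below -/
import Mathlib

section
/- For n ≥ 2 and every integer k, the generating function A(n,k;u,d) = Σ_{π ∈ GS_n, |asc(π)| = k} u^{nua(π)} d^{nda(π)} satisfies the recurrence A(n,k;u,d) = (k+1+(n−1)d)·A(n−1,k;u,d) + (n−k+(n−1)u)·A(n−1,k−1;u,d), with initial condition A(1,0;u,d) = 1. -/
/-!
Generalized permutations as insertion histories, their ascent sets (Rules
1–5 of Herscovici), the statistics `nua` (number of `↑`-tiles) and `nda`
(number of `↓`-tiles), and the recurrence for the generating function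
`A(n,k;u,d)`.
-/


/-- The possible insertions producing a generalized permutation of length `m`
from one of length `m - 1`: a plain tile `m` in one of `m` positions
(1-indexed position `i.val + 1`), or a marked tile `m↑` resp. `m↓` inserted
immediately to the left of one of the `m - 1` existing tiles
(at 1-indexed position `i.val + 1`). -/
inductive Step (m : ℕ) : Type
  | plain : Fin m → Step m
  | up : Fin (m - 1) → Step m
  | down : Fin (m - 1) → Step m
  deriving DecidableEq, Fintype

/-- The effect of an insertion on the ascent set, following Rules 1–5.
Here `m` is the length of the word *after* the insertion and `A` is the
ascent set before the insertion. -/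
def stepAsc {m : ℕ} (s : Step m) (A : Finset ℕ) : Finset ℕ :=
  match s with
  | .plain i =>
      -- plain tile `m` at position `p = i.val + 1`
      if i.val + 1 = 1 then
        -- Rule 1: insertion in the first position
        A.image (· + 1)
      else if i.val + 1 = m then
        -- Rule 2: insertion in the last position
        A ∪ {m - 1}
      else if i.val ∈ A then
        -- Rule 3(a): `p - 1` was an ascent
        (A.filter (· < i.val + 1)) ∪ ((A.filter (i.val + 1 ≤ ·)).image (· + 1))
      else
        -- Rule 3(b): `p - 1` was not an ascent
        (A.filter (· < i.val + 1)) ∪ {i.val + 1} ∪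
          ((A.filter (i.val + 1 ≤ ·)).image (· + 1))
  | .up i =>
      -- Rule 4: `m↑` at position `p = i.val + 1`
      (A.filter (· < i.val + 1)) ∪ {i.val + 1} ∪
        ((A.filter (i.val + 1 ≤ ·)).image (· + 1))
  | .down i =>
      -- Rule 5: `m↓` at position `p = i.val + 1`
      (A.filter (· < i.val + 1)) ∪ ((A.filter (i.val + 1 ≤ ·)).image (· + 1))

/-- The set of generalized permutations of `[n]`, identified with the set of
valid insertion histories. -/
abbrev GS (n : ℕ) := (i : Fin (n - 1)) → Step (i.val + 2)

/-- The ascent set of a generalized permutation, computed by applying the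
rules along the insertion history, starting from the trivial permutation of
`[1]` with empty ascent set. -/
def ascOf {n : ℕ} (π : GS n) : Finset ℕ :=
  (List.finRange (n - 1)).foldl (fun A i => stepAsc (π i) A) ∅


/-- Whether a step inserts a tile marked `↑`. -/
def Step.isUp {m : ℕ} : Step m → Bool
  | .up _ => true
  | _ => false

/-- Whether a step inserts a tile marked `↓`. -/
def Step.isDown {m : ℕ} : Step m → Bool
  | .down _ => true
  | _ => false

/-- `nua π` is the number of tiles marked `↑` in the generalized permutation `π`. -/
def nua {n : ℕ} (π : GS n) : ℕ := (Finset.univ.filter fun i => (π i).isUp).card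

/-- `nda π` is the number of tiles marked `↓` in the generalized permutation `π`. -/
def nda {n : ℕ} (π : GS n) : ℕ := (Finset.univ.filter fun i => (π i).isDown).card

open MvPolynomial in
/-- `A(n,k;u,d) = Σ_{π ∈ GS_n, |asc(π)| = k} u^{nua(π)} d^{nda(π)}`, an element
of `ℤ[u,d]` (with `u = X 0`, `d = X 1`), for an arbitrary integer `k`. -/
noncomputable def Agp (n : ℕ) (k : ℤ) : MvPolynomial (Fin 2) ℤ :=
  ∑ π ∈ Finset.univ.filter fun π : GS n => ((ascOf π).card : ℤ) = k,
    X 0 ^ nua π * X 1 ^ nda π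

/-!
The last insertion of a history changes the number of ascents by `0` or `1`, and how many
insertions do which depends on the ascent set `A` of the word only through `a = |A|`. In a word of
length `n`, where `A ⊆ {1, …, n - 1}`:

* a plain tile inserted after `j` tiles keeps `a` if `j ∈ {0} ∪ A` and raises it otherwise, so that
  `a + 1` positions keep it and `n - a` raise it;
* each of the `n` insertions of a tile marked `↑` raises `a`;
* each of the `n` insertions of a tile marked `↓` keeps `a`.

Hence summing a function of the number of ascents over the last insertion, with weights `1`, `u`
and `d` for the three kinds of tile, applies the operator
`f ↦ (a ↦ (a + 1 + n d) f(a) + (n - a + n u) f(a + 1))`, and the recurrence is the case where `f`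
is the indicator function of `k`.
-/

open Finset

/-- Opening a gap at `p`: the elements of `A` that are at least `p` move up by one. This is how the
ascents of a word are renumbered when a tile is inserted at position `p`. -/
def openGap (A : Finset ℕ) (p : ℕ) : Finset ℕ :=
  A.filter (· < p) ∪ (A.filter (p ≤ ·)).image (· + 1)

lemma mem_openGap {A : Finset ℕ} {p x : ℕ} :
    x ∈ openGap A p ↔ x ∈ A ∧ x < p ∨ ∃ y ∈ A, p ≤ y ∧ y + 1 = x := by
  simp only [openGap, mem_union, mem_filter, mem_image, and_assoc]

lemma notMem_openGap (A : Finset ℕ) (p : ℕ) : p ∉ openGap A p := by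
  rw [mem_openGap]
  grind

lemma card_openGap (A : Finset ℕ) (p : ℕ) : #(openGap A p) = #A := by
  have hdisj : Disjoint (A.filter (· < p)) ((A.filter (p ≤ ·)).image (· + 1)) := by
    rw [disjoint_left]
    grind
  rw [openGap, card_union_of_disjoint hdisj, card_image_of_injective _ (add_left_injective 1)]
  simpa only [not_lt] using card_filter_add_card_filter_not (s := A) (· < p)

lemma card_insert_openGap (A : Finset ℕ) (p : ℕ) : #(insert p (openGap A p)) = #A + 1 := by
  rw [card_insert_of_notMem (notMem_openGap A p), card_openGap]

lemma openGap_subset_Ico {A : Finset ℕ} {n : ℕ} (hA : A ⊆ Ico 1 n) (p : ℕ) :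
    openGap A p ⊆ Ico 1 (n + 1) := by
  intro x hx
  have hlt (y : ℕ) (hy : y ∈ A) : 1 ≤ y ∧ y < n := mem_Ico.1 (hA hy)
  rw [mem_openGap] at hx
  grind

lemma openGap_one {A : Finset ℕ} (hA : 0 ∉ A) : openGap A 1 = A.image (· + 1) := by
  ext x
  rw [mem_openGap]
  grind

section StepAsc

variable {n : ℕ} {A : Finset ℕ}

lemma stepAsc_up (i : Fin (n - 1)) (A : Finset ℕ) :
    stepAsc (.up i) A = insert (i.val + 1) (openGap A (i.val + 1)) := by
  simp only [stepAsc, openGap, union_singleton, insert_union]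

lemma stepAsc_down (i : Fin (n - 1)) (A : Finset ℕ) :
    stepAsc (.down i) A = openGap A (i.val + 1) :=
  rfl

lemma stepAsc_plain_of_mem (hA : A ⊆ Ico 1 n) {i : Fin (n + 1)} (hi : i.val ∈ insert 0 A) :
    stepAsc (.plain i) A = openGap A (i.val + 1) := by
  rcases mem_insert.1 hi with h0 | hiA
  · have hzero : 0 ∉ A := fun h => by simpa using hA h
    simp [stepAsc, h0, openGap_one hzero]
  · have hbounds := mem_Ico.1 (hA hiA)
    rw [stepAsc, if_neg (by omega), if_neg (by omega), if_pos hiA, openGap]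

lemma stepAsc_plain_last (hn : n ≠ 0) (A : Finset ℕ) :
    stepAsc (.plain (Fin.last n)) A = insert n A := by
  simp [stepAsc, hn]

lemma stepAsc_plain_of_notMem {i : Fin (n + 1)} (hin : i.val ≠ n) (hi : i.val ∉ insert 0 A) :
    stepAsc (.plain i) A = insert (i.val + 1) (openGap A (i.val + 1)) := by
  rw [mem_insert, not_or] at hi
  simp only [stepAsc, openGap, Nat.add_eq_right, Nat.add_right_cancel_iff, hi, hin, if_false,
    union_singleton, insert_union]

lemma card_stepAsc_plain (hA : A ⊆ Ico 1 n) (i : Fin (n + 1)) :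
    #(stepAsc (.plain i) A) = if i.val ∈ insert 0 A then #A else #A + 1 := by
  split_ifs with hi
  · rw [stepAsc_plain_of_mem hA hi, card_openGap]
  · by_cases hin : i.val = n
    · obtain rfl : i = Fin.last n := Fin.ext hin
      rw [Fin.val_last, mem_insert, not_or] at hi
      rw [stepAsc_plain_last hi.1, card_insert_of_notMem hi.2]
    · rw [stepAsc_plain_of_notMem hin hi, card_insert_openGap]

lemma stepAsc_subset_Ico (s : Step (n + 1)) (hA : A ⊆ Ico 1 n) :
    stepAsc s A ⊆ Ico 1 (n + 1) := by
  have hgap (i : ℕ) (hi : i < n) : insert (i + 1) (openGap A (i + 1)) ⊆ Ico 1 (n + 1) :=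
    insert_subset (mem_Ico.2 ⟨by omega, by omega⟩) (openGap_subset_Ico hA _)
  cases s with
  | plain i =>
    by_cases hi : i.val ∈ insert 0 A
    · rw [stepAsc_plain_of_mem hA hi]
      exact openGap_subset_Ico hA _
    · by_cases hin : i.val = n
      · obtain rfl : i = Fin.last n := Fin.ext hin
        rw [Fin.val_last, mem_insert, not_or] at hi
        rw [stepAsc_plain_last hi.1]
        exact insert_subset (mem_Ico.2 ⟨by omega, by omega⟩)
          (hA.trans (Ico_subset_Ico_right n.le_succ))
      · rw [stepAsc_plain_of_notMem hin hi]
        exact hgap i (by omega)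
  | up i =>
    rw [stepAsc_up]
    exact hgap i i.isLt
  | down i => exact openGap_subset_Ico hA _

end StepAsc

lemma sum_ite_mem_of_subset {ι R : Type*} [DecidableEq ι] [Ring R] {s t : Finset ι} (h : t ⊆ s)
    (x y : R) : ∑ i ∈ s, (if i ∈ t then x else y) = #t * x + (#s - #t) * y := by
  rw [sum_ite, filter_mem_eq_inter, inter_eq_right.2 h, ← sdiff_eq_filter, sum_const, sum_const,
    nsmul_eq_mul, nsmul_eq_mul, cast_card_sdiff h]

namespace Step

/-- `Step m` as the disjoint union of its three kinds of insertion, for splitting sums. -/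
def sumEquiv (m : ℕ) : (Fin m ⊕ Fin (m - 1)) ⊕ Fin (m - 1) ≃ Step m where
  toFun := Sum.elim (Sum.elim plain up) down
  invFun
    | plain i => .inl (.inl i)
    | up i => .inl (.inr i)
    | down i => .inr i
  left_inv := by rintro ((i | i) | i) <;> rfl
  right_inv := by rintro (i | i | i) <;> rfl

lemma sum_univ {M : Type*} [AddCommMonoid M] {m : ℕ} (f : Step m → M) :
    ∑ s, f s = ∑ i, f (plain i) + ∑ i, f (up i) + ∑ i, f (down i) := by
  rw [← (sumEquiv m).sum_comp, Fintype.sum_sum_type, Fintype.sum_sum_type]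
  rfl

/-- The factor that an insertion contributes to the monomial `u ^ nua π * d ^ nda π`. -/
def weight {R : Type*} [One R] (u d : R) {m : ℕ} : Step m → R
  | plain _ => 1
  | up _ => u
  | down _ => d

lemma sum_apply_card_stepAsc_plain {R : Type*} [Ring R] {n : ℕ} {A : Finset ℕ}
    (hA : A ⊆ Ico 1 n) (f : ℕ → R) :
    ∑ i : Fin (n + 1), f #(stepAsc (.plain i) A) =
      (#A + 1) * f #A + (n - #A) * f (#A + 1) := by
  have hsub : insert 0 A ⊆ range (n + 1) := by
    refine insert_subset (by simp) fun x hx => ?_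
    have := mem_Ico.1 (hA hx)
    exact mem_range.2 (by omega)
  have hcard : #(insert 0 A) = #A + 1 := card_insert_of_notMem fun h => by simpa using hA h
  calc ∑ i : Fin (n + 1), f #(stepAsc (.plain i) A)
      = ∑ i : Fin (n + 1), if i.val ∈ insert 0 A then f #A else f (#A + 1) :=
        sum_congr rfl fun i _ => by rw [card_stepAsc_plain hA, apply_ite f]
    _ = ∑ j ∈ range (n + 1), if j ∈ insert 0 A then f #A else f (#A + 1) :=
        Fin.sum_univ_eq_sum_range (fun j => if j ∈ insert 0 A then f #A else f (#A + 1)) (n + 1)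
    _ = (#A + 1) * f #A + (n - #A) * f (#A + 1) := by
        rw [sum_ite_mem_of_subset hsub, hcard, card_range]
        push_cast
        rw [add_sub_add_right_eq_sub]

lemma sum_weight_mul_card_stepAsc {R : Type*} [CommRing R] (u d : R) {n : ℕ} {A : Finset ℕ}
    (hA : A ⊆ Ico 1 n) (f : ℕ → R) :
    ∑ s : Step (n + 1), s.weight u d * f #(stepAsc s A) =
      (#A + 1 + n * d) * f #A + (n - #A + n * u) * f (#A + 1) := by
  simp only [sum_univ, weight, one_mul, sum_apply_card_stepAsc_plain hA, stepAsc_up, stepAsc_down,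
    card_insert_openGap, card_openGap, sum_const, card_univ, Fintype.card_fin, Nat.add_sub_cancel,
    nsmul_eq_mul]
  ring

end Step

namespace GS

variable {m : ℕ}

/-- Extend a history by a last insertion; `Fin.snoc` for the dependent family `Step`. -/
def snoc (π : GS (m + 1)) (s : Step (m + 2)) : GS (m + 2) :=
  Fin.snoc (α := fun i : Fin (m + 1) => Step (i.val + 2)) π s

lemma snoc_castSucc (π : GS (m + 1)) (s : Step (m + 2)) (i : Fin m) : snoc π s i.castSucc = π i :=
  Fin.snoc_castSucc (α := fun i : Fin (m + 1) => Step (i.val + 2)) s π i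

lemma snoc_last (π : GS (m + 1)) (s : Step (m + 2)) : snoc π s (Fin.last m) = s :=
  Fin.snoc_last (α := fun i : Fin (m + 1) => Step (i.val + 2)) s π

lemma exists_eq_snoc (π : GS (m + 2)) : ∃ ρ s, π = snoc ρ s :=
  ⟨_, _, (Fin.snoc_init_self (α := fun i : Fin (m + 1) => Step (i.val + 2)) π).symm⟩

lemma sum_univ_snoc {M : Type*} [AddCommMonoid M] (f : GS (m + 2) → M) :
    ∑ π, f π = ∑ π : GS (m + 1), ∑ s : Step (m + 2), f (snoc π s) := by
  rw [← Fintype.sum_prod_type_right']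
  exact ((Fin.snocEquiv fun i : Fin (m + 1) => Step (i.val + 2)).sum_comp f).symm

lemma ascOf_snoc (π : GS (m + 1)) (s : Step (m + 2)) :
    ascOf (snoc π s) = stepAsc s (ascOf π) := by
  change (List.finRange (m + 1)).foldl (fun A i => stepAsc (snoc π s i) A) ∅ =
    stepAsc s ((List.finRange m).foldl (fun A i => stepAsc (π i) A) ∅)
  simp only [List.finRange_succ_last, List.foldl_append, List.foldl_map, List.foldl_cons,
    List.foldl_nil, snoc_castSucc, snoc_last]
  rfl

lemma ascOf_subset_Ico : ∀ {m : ℕ} (π : GS (m + 1)), ascOf π ⊆ Ico 1 (m + 1)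
  | 0, _ => empty_subset _
  | _ + 1, π => by
    obtain ⟨ρ, s, rfl⟩ := exists_eq_snoc π
    rw [ascOf_snoc]
    exact stepAsc_subset_Ico s (ascOf_subset_Ico ρ)

section Weight

variable {R : Type*} [CommMonoid R] (u d : R)

/-- The monomial of a history in the generating function, with values of `u` and `d` in an
arbitrary commutative monoid. -/
def weight {n : ℕ} (π : GS n) : R := u ^ nua π * d ^ nda π

lemma weight_eq_prod {n : ℕ} (π : GS n) : weight u d π = ∏ i, (π i).weight u d := by
  have hstep {m : ℕ} (s : Step m) :
      s.weight u d = (if s.isUp then u else 1) * (if s.isDown then d else 1) := by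
    cases s <;> simp [Step.weight, Step.isUp, Step.isDown]
  simp only [weight, nua, nda, hstep, prod_mul_distrib, prod_ite, prod_const, one_pow, mul_one]

lemma weight_snoc (π : GS (m + 1)) (s : Step (m + 2)) :
    weight u d (snoc π s) = weight u d π * s.weight u d := by
  rw [weight_eq_prod, weight_eq_prod]
  change ∏ i : Fin (m + 1), (snoc π s i).weight u d = (∏ i : Fin m, (π i).weight u d) * _
  simp only [Fin.prod_univ_castSucc, snoc_castSucc, snoc_last]

end Weight

lemma sum_weight_mul_card_ascOf {R : Type*} [CommRing R] (u d : R) (f : ℕ → R) :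
    ∑ π : GS (m + 2), weight u d π * f #(ascOf π) =
      ∑ π : GS (m + 1), weight u d π *
        ((#(ascOf π) + 1 + (m + 1) * d) * f #(ascOf π) +
          (m + 1 - #(ascOf π) + (m + 1) * u) * f (#(ascOf π) + 1)) := by
  rw [sum_univ_snoc]
  refine sum_congr rfl fun π _ => ?_
  simp only [weight_snoc, ascOf_snoc, mul_assoc, ← mul_sum,
    Step.sum_weight_mul_card_stepAsc u d (ascOf_subset_Ico π) f, Nat.cast_add, Nat.cast_one]

end GS

open MvPolynomial in
lemma Agp_eq_sum_weight (n : ℕ) (k : ℤ) :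
    Agp n k = ∑ π : GS n, GS.weight (X 0) (X 1) π * if (#(ascOf π) : ℤ) = k then 1 else 0 := by
  simp only [Agp, GS.weight, sum_filter, mul_ite, mul_one, mul_zero]

open MvPolynomial in
/-- `A(1,0;u,d) = 1`, and for `n ≥ 2` and every integer `k`,
`A(n,k;u,d) = (k+1+(n-1)d)·A(n-1,k;u,d) + (n-k+(n-1)u)·A(n-1,k-1;u,d)`. -/
theorem Agp_recurrence :
    Agp 1 0 = 1 ∧
      ∀ n : ℕ, 2 ≤ n → ∀ k : ℤ,
        Agp n k =
          (C (k + 1) + C ((n : ℤ) - 1) * X 1) * Agp (n - 1) k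
            + (C ((n : ℤ) - k) + C ((n : ℤ) - 1) * X 0) * Agp (n - 1) (k - 1) := by
  refine ⟨by simp [Agp, ascOf, nua, nda], fun n hn k => ?_⟩
  obtain ⟨m, rfl⟩ := Nat.exists_eq_add_of_le' hn
  rw [show m + 2 - 1 = m + 1 from rfl]
  simp only [Agp_eq_sum_weight]
  rw [GS.sum_weight_mul_card_ascOf (X 0) (X 1) fun a => if (a : ℤ) = k then 1 else 0, mul_sum,
    mul_sum, ← sum_add_distrib]
  refine sum_congr rfl fun π _ => ?_
  have hpred : (#(ascOf π) : ℤ) = k - 1 ↔ ((#(ascOf π) + 1 : ℕ) : ℤ) = k := by omega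
  simp only [hpred]
  split_ifs with h h' h'
  · omega
  · simp [← h]
    ring
  · simp [← h']
    ring
  · simp
end

section
/- For every n ≥ 1, the identity A(n, n−1; u, d) = ∏_{j=0}^{n−1} (j·u + 1) holds in the polynomial ring ℤ[u,d]; in particular A(n,n−1;u,d) does not involve the variable d, and equals Σ_{j=0}^{n} |s(n, n−j)| · u^j where |s(n,j)| are the unsigned Stirling numbers of the first kind. -/
/-!
At `k = n - 1` the first term of the recurrence for `A n k` drops out, because `A m k` vanishes as
soon as `k ≥ m`; the second term has coefficient `1 + (n - 1) u`, so the product formula follows by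
induction on `n`. The Stirling sum is the expansion of the rising product
`y (x + y) (2 x + y) ⋯ ((n - 1) x + y)` at `x = u` and `y = 1`. Homogenizing with `y` makes the
exponents `(i, j)` run over the antidiagonal `i + j = n`, where multiplication by `x` and by `y`
are the two index shifts in the recurrence of the Stirling numbers.
-/

open MvPolynomial in
/-- The polynomials `A(n,k;u,d) ∈ ℤ[u,d]` (with `u = X 0`, `d = X 1`), defined
for `n ≥ 1` and `k : ℤ` by `A(1,0) = 1`, `A(1,k) = 0` for `k ≠ 0`, and
`A(n,k) = (k+1+(n-1)d)·A(n-1,k) + (n-k+(n-1)u)·A(n-1,k-1)` for `n ≥ 2`.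
(The value at `n = 0` is irrelevant and set to `0`.) -/
noncomputable def A : ℕ → ℤ → MvPolynomial (Fin 2) ℤ
  | 0, _ => 0
  | 1, k => if k = 0 then 1 else 0
  | n + 2, k =>
      (C (k + 1) + C ((n : ℤ) + 1) * X 1) * A (n + 1) k
        + (C ((n : ℤ) + 2 - k) + C ((n : ℤ) + 1) * X 0) * A (n + 1) (k - 1)

/-- The unsigned Stirling numbers of the first kind `|s(n,j)|`, defined by
`|s(0,0)| = 1`, `|s(n,j)| = 0` for `j > n` (and for `j < 0`, which does not
occur for natural `j`), and `|s(n+1,j)| = n·|s(n,j)| + |s(n,j-1)|`. -/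
def stirling1 : ℕ → ℕ → ℕ
  | 0, 0 => 1
  | 0, _ + 1 => 0
  | _ + 1, 0 => 0
  | n + 1, j + 1 => n * stirling1 n (j + 1) + stirling1 n j

theorem stirling1_eq_stirlingFirst (n j : ℕ) : stirling1 n j = n.stirlingFirst j := by
  induction n generalizing j with
  | zero => cases j <;> rfl
  | succ n ih =>
    cases j with
    | zero => rfl
    | succ j => rw [stirling1, Nat.stirlingFirst_succ_succ, ih, ih]

theorem mul_stirlingFirst_zero_right (n : ℕ) : n * n.stirlingFirst 0 = 0 := by
  cases n <;> simp

section RisingProduct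

open Finset

theorem sum_antidiagonal_succ_left_eq_succ_right {M : Type*} [AddCommMonoid M] {n : ℕ}
    {f : ℕ × ℕ → M} (hleft : f (n + 1, 0) = 0) (hright : f (0, n + 1) = 0) :
    ∑ p ∈ antidiagonal n, f (p.1 + 1, p.2) = ∑ p ∈ antidiagonal n, f (p.1, p.2 + 1) := by
  calc ∑ p ∈ antidiagonal n, f (p.1 + 1, p.2)
      = ∑ p ∈ antidiagonal (n + 1), f p := by
        rw [Nat.sum_antidiagonal_succ, hright, zero_add]
    _ = ∑ p ∈ antidiagonal n, f (p.1, p.2 + 1) := by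
        rw [Nat.sum_antidiagonal_succ', hleft, zero_add]

variable {R : Type*} [CommSemiring R]

theorem sum_antidiagonal_stirlingFirst_succ (n : ℕ) (x y : R) :
    ∑ p ∈ antidiagonal (n + 1), ((n + 1).stirlingFirst p.2 : R) * x ^ p.1 * y ^ p.2 =
      (∑ p ∈ antidiagonal n, (n.stirlingFirst p.2 : R) * x ^ p.1 * y ^ p.2) * (n * x + y) := by
  let f : ℕ × ℕ → R := fun p ↦ (n * n.stirlingFirst p.2 : ℕ) * x ^ p.1 * y ^ p.2
  have hshift : ∑ p ∈ antidiagonal n, f (p.1 + 1, p.2) = ∑ p ∈ antidiagonal n, f (p.1, p.2 + 1) :=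
    sum_antidiagonal_succ_left_eq_succ_right
      (by simp only [f, mul_stirlingFirst_zero_right, Nat.cast_zero, zero_mul])
      (by simp only [f, Nat.stirlingFirst_eq_zero_of_lt n.lt_succ_self, mul_zero, Nat.cast_zero,
        zero_mul])
  calc ∑ p ∈ antidiagonal (n + 1), ((n + 1).stirlingFirst p.2 : R) * x ^ p.1 * y ^ p.2
      = ∑ p ∈ antidiagonal n,
          ((n + 1).stirlingFirst (p.2 + 1) : R) * x ^ p.1 * y ^ (p.2 + 1) := by
        simp [Nat.sum_antidiagonal_succ']
    _ = ∑ p ∈ antidiagonal n, f (p.1, p.2 + 1) +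
          ∑ p ∈ antidiagonal n, (n.stirlingFirst p.2 : R) * x ^ p.1 * y ^ (p.2 + 1) := by
        simp only [f, Nat.stirlingFirst_succ_succ, Nat.cast_add, add_mul, sum_add_distrib]
    _ = ∑ p ∈ antidiagonal n, f (p.1 + 1, p.2) +
          ∑ p ∈ antidiagonal n, (n.stirlingFirst p.2 : R) * x ^ p.1 * y ^ (p.2 + 1) := by
        rw [hshift]
    _ = (∑ p ∈ antidiagonal n, (n.stirlingFirst p.2 : R) * x ^ p.1 * y ^ p.2) * (n * x + y) := by
        rw [sum_mul, ← sum_add_distrib]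
        refine sum_congr rfl fun p _ ↦ ?_
        simp only [f, Nat.cast_mul]
        ring

theorem prod_range_natCast_mul_add_eq_sum_stirlingFirst (n : ℕ) (x y : R) :
    ∏ j ∈ range n, (j * x + y) =
      ∑ p ∈ antidiagonal n, (n.stirlingFirst p.2 : R) * x ^ p.1 * y ^ p.2 := by
  induction n with
  | zero => simp
  | succ n ih => rw [prod_range_succ, ih, sum_antidiagonal_stirlingFirst_succ]

theorem prod_range_natCast_mul_add_one_eq_sum_stirlingFirst (n : ℕ) (x : R) :
    ∏ j ∈ range n, (j * x + 1) = ∑ j ∈ range (n + 1), (n.stirlingFirst (n - j) : R) * x ^ j := by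
  rw [prod_range_natCast_mul_add_eq_sum_stirlingFirst, Nat.sum_antidiagonal_eq_sum_range_succ_mk]
  simp only [one_pow, mul_one]

end RisingProduct

section Top

open MvPolynomial

theorem A_eq_zero_of_le {n : ℕ} {k : ℤ} (h : n ≤ k) : A n k = 0 := by
  induction n generalizing k with
  | zero => rfl
  | succ n ih =>
    cases n with
    | zero => exact if_neg (by lia)
    | succ n => rw [A, ih (by lia), ih (by lia), mul_zero, mul_zero, add_zero]

theorem A_top_succ (n : ℕ) :
    A (n + 2) (n + 1 : ℕ) =
      A (n + 1) n * (((n + 1 : ℕ) : MvPolynomial (Fin 2) ℤ) * X 0 + 1) := by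
  have hvanish : A (n + 1) (n + 1 : ℕ) = 0 := A_eq_zero_of_le le_rfl
  have hindex : ((n + 1 : ℕ) : ℤ) - 1 = n := by lia
  have hcoeff : (n : ℤ) + 2 - (n + 1 : ℕ) = 1 := by lia
  rw [A, hvanish, hindex, hcoeff]
  simp only [map_add, map_natCast, map_one, Nat.cast_add, Nat.cast_one]
  ring

theorem A_succ_self_eq_prod (n : ℕ) :
    A (n + 1) n = ∏ j ∈ Finset.range (n + 1), ((j : MvPolynomial (Fin 2) ℤ) * X 0 + 1) := by
  induction n with
  | zero => simp [A]
  | succ n ih => rw [Finset.prod_range_succ, ← ih, A_top_succ]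

end Top

open MvPolynomial in
/-- For every `n ≥ 1`, `A(n,n-1;u,d) = ∏_{j=0}^{n-1} (j·u + 1)` in `ℤ[u,d]`;
in particular it does not involve the variable `d`, and it equals
`Σ_{j=0}^{n} |s(n, n-j)| · u^j` where `|s(n,j)|` are the unsigned Stirling
numbers of the first kind. -/
theorem A_top_eq_prod (n : ℕ) (hn : 1 ≤ n) :
    A n ((n : ℤ) - 1) = ∏ j ∈ Finset.range n, (C (j : ℤ) * X 0 + 1) ∧
      A n ((n : ℤ) - 1) =
        ∑ j ∈ Finset.range (n + 1), C ((stirling1 n (n - j) : ℤ)) * X 0 ^ j := by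
  obtain ⟨m, rfl⟩ := Nat.exists_eq_add_of_le' hn
  have hindex : ((m + 1 : ℕ) : ℤ) - 1 = m := by lia
  simp only [hindex, map_natCast, stirling1_eq_stirlingFirst]
  exact ⟨A_succ_self_eq_prod m, (A_succ_self_eq_prod m).trans
    (prod_range_natCast_mul_add_one_eq_sum_stirlingFirst (m + 1) (X 0))⟩
end

section
/- For every n ≥ 1, the polynomial A(n, 0; u, d) is obtained from A(n, n−1; u, d) by exchanging the variables u and d; that is, A(n,0;u,d) = A(n,n−1;d,u) in ℤ[u,d]. -/
open MvPolynomial in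
theorem A_succ {n : ℕ} (hn : 1 ≤ n) (k : ℤ) :
    A (n + 1) k = (C (k + 1) + C (n : ℤ) * X 1) * A n k
      + (C ((n : ℤ) + 1 - k) + C (n : ℤ) * X 0) * A n (k - 1) := by
  obtain ⟨m, rfl⟩ := Nat.exists_eq_add_of_le' hn
  rw [A, Nat.cast_add_one, add_assoc (m : ℤ) 1 1, one_add_one_eq_two]

open MvPolynomial in
theorem A_zero_eq_swap_A_top_general (n : ℕ) (hn : 1 ≤ n) (k : ℤ) :
    A n k = rename (Equiv.swap (0 : Fin 2) 1) (A n ((n : ℤ) - 1 - k)) := by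
  induction n, hn using Nat.le_induction generalizing k with
  | base => by_cases hk : k = 0 <;> simp [A, hk]
  | succ n hn ih =>
    calc A (n + 1) k
      _ = (C (k + 1) + C (n : ℤ) * X 1) * A n k
          + (C ((n : ℤ) + 1 - k) + C (n : ℤ) * X 0) * A n (k - 1) := A_succ hn k
      _ = (C (k + 1) + C (n : ℤ) * X 1) * rename (Equiv.swap 0 1) (A n (n - k - 1))
          + (C ((n : ℤ) + 1 - k) + C (n : ℤ) * X 0) * rename (Equiv.swap 0 1) (A n (n - k)) := by
        rw [ih k, ih (k - 1), sub_right_comm, sub_sub_sub_cancel_right]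
      _ = rename (Equiv.swap 0 1)
          ((C ((n : ℤ) - k + 1) + C (n : ℤ) * X 1) * A n (n - k)
            + (C ((n : ℤ) + 1 - (n - k)) + C (n : ℤ) * X 0) * A n (n - k - 1)) := by
        simp only [map_add, map_mul, rename_C, rename_X, Equiv.swap_apply_left,
          Equiv.swap_apply_right, map_sub]
        ring
      _ = rename (Equiv.swap 0 1) (A (n + 1) (((n + 1 : ℕ) : ℤ) - 1 - k)) := by
        rw [← A_succ hn, Nat.cast_add_one, add_sub_cancel_right]

open MvPolynomial in
/-- For every `n ≥ 1`, `A(n,0;u,d)` is obtained from `A(n,n-1;u,d)` by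
exchanging the variables `u` and `d`: `A(n,0;u,d) = A(n,n-1;d,u)`. -/
theorem A_zero_eq_swap_A_top (n : ℕ) (hn : 1 ≤ n) :
    A n 0 = rename (Equiv.swap (0 : Fin 2) 1) (A n ((n : ℤ) - 1)) := by
  simpa only [sub_zero] using A_zero_eq_swap_A_top_general n hn 0
end
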